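/- arXiv:2402.11184 — 5 statements merged into one kernel-verified Lean document; each statement's English description precedes it below -/
import Mathlib

section
/- Let F, G ∈ ℂ^{n×n} with F Hermitian positive definite and G positive semidefinite, and set H = (1/2)(G + G*). Let W = (F + H)⁻¹(F + G). If λ ∈ ℂ is an eigenvalue of W with eigenvector x ≠ 0, then λ = 1 − (1/2) · (x*(G* − G)x) / (x*(F + H)x); in particular Re(λ) = 1. -/
/-!
Write `q M = x* M x` for the quadratic form of `M` at `x`. Since `q Mᴴ = conj (q M)`
(`dotProduct_conjTranspose_mulVec`), `q (F + H)` is real, with value `Re q F + Re q G`, which is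
positive for `x ≠ 0`. In particular `F + H` has trivial kernel, so `W x = μ x` may be multiplied by
`F + H` to give `(F + G) x = μ (F + H) x`, and hence `q (F + G) = μ q (F + H)`. As
`F + G = (F + H) - (Gᴴ - G) / 2`, dividing by `q (F + H)` gives the formula for `μ`; comparing real
parts, using `Re q (F + G) = q (F + H)`, gives `Re μ = 1`.
-/

open Matrix

theorem dotProduct_conjTranspose_mulVec {n : ℕ} (A : Matrix (Fin n) (Fin n) ℂ)
    (x : Fin n → ℂ) : star x ⬝ᵥ (Aᴴ *ᵥ x) = star (star x ⬝ᵥ (A *ᵥ x)) := by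
  rw [star_dotProduct, star_mulVec, conjTranspose_conjTranspose, ← dotProduct_mulVec]

/-- Let `F, G ∈ ℂ^{n×n}` with `F` Hermitian positive definite and `G`
positive semidefinite, and set `H = (1/2)(G + G*)`.  Let `W = (F + H)⁻¹(F + G)`.  If `λ` is an
eigenvalue of `W` with eigenvector `x ≠ 0`, then
`λ = 1 − (1/2) · (x*(G* − G)x) / (x*(F + H)x)`; in particular `Re λ = 1`. -/
theorem stmt1 {n : ℕ} (F G : Matrix (Fin n) (Fin n) ℂ)
    (hFherm : Fᴴ = F)
    (hFpos : ∀ x : Fin n → ℂ, x ≠ 0 → 0 < (star x ⬝ᵥ (F *ᵥ x)).re)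
    (hGpsd : ∀ x : Fin n → ℂ, 0 ≤ (star x ⬝ᵥ (G *ᵥ x)).re)
    (H : Matrix (Fin n) (Fin n) ℂ) (hH : H = (1 / 2 : ℂ) • (G + Gᴴ))
    (W : Matrix (Fin n) (Fin n) ℂ) (hW : W = (F + H)⁻¹ * (F + G))
    (μ : ℂ) (x : Fin n → ℂ) (hx : x ≠ 0) (hEig : W *ᵥ x = μ • x) :
    μ = 1 - (1 / 2 : ℂ) * (star x ⬝ᵥ ((Gᴴ - G) *ᵥ x)) / (star x ⬝ᵥ ((F + H) *ᵥ x)) ∧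
      μ.re = 1 := by
  have hq : ∀ y : Fin n → ℂ, star y ⬝ᵥ ((F + H) *ᵥ y) =
      star y ⬝ᵥ (F *ᵥ y) + (1 / 2 : ℂ) * (star y ⬝ᵥ (G *ᵥ y) + star (star y ⬝ᵥ (G *ᵥ y))) := by
    intro y
    rw [hH, add_mulVec, smul_mulVec, add_mulVec, dotProduct_add, dotProduct_smul, dotProduct_add,
      dotProduct_conjTranspose_mulVec, smul_eq_mul]
  have hre : ∀ y : Fin n → ℂ, (star y ⬝ᵥ ((F + H) *ᵥ y)).re =
      (star y ⬝ᵥ (F *ᵥ y)).re + (star y ⬝ᵥ (G *ᵥ y)).re := by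
    intro y
    rw [hq]
    simp [Complex.mul_re]
    ring
  have hpos : ∀ y : Fin n → ℂ, y ≠ 0 → 0 < (star y ⬝ᵥ ((F + H) *ᵥ y)).re := by
    intro y hy
    rw [hre]
    exact add_pos_of_pos_of_nonneg (hFpos y hy) (hGpsd y)
  have him : (star x ⬝ᵥ ((F + H) *ᵥ x)).im = 0 := by
    have hF : (star x ⬝ᵥ (F *ᵥ x)).im = 0 := by
      have h := dotProduct_conjTranspose_mulVec F x
      rw [hFherm] at h
      exact Complex.conj_eq_iff_im.mp h.symm
    rw [hq]
    simp [Complex.mul_im, hF]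
  have hunit : IsUnit (F + H).det := by
    rw [isUnit_iff_ne_zero]
    intro hdet
    obtain ⟨v, hv, hv0⟩ := exists_mulVec_eq_zero_iff.mpr hdet
    have h := hpos v hv
    simp [hv0] at h
  have hgen : (F + G) *ᵥ x = μ • ((F + H) *ᵥ x) := by
    rw [← mulVec_smul, ← hEig, hW, mulVec_mulVec, mul_nonsing_inv_cancel_left _ _ hunit]
  have hscal : star x ⬝ᵥ (F *ᵥ x) + star x ⬝ᵥ (G *ᵥ x) = μ * (star x ⬝ᵥ ((F + H) *ᵥ x)) := by
    rw [← dotProduct_add, ← add_mulVec, hgen, dotProduct_smul, smul_eq_mul]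
  have hd := hpos x hx
  have hd0 : star x ⬝ᵥ ((F + H) *ᵥ x) ≠ 0 := by
    intro h
    simp [h] at hd
  constructor
  · have hqx := hq x
    rw [sub_mulVec, dotProduct_sub, dotProduct_conjTranspose_mulVec, eq_sub_iff_add_eq]
    generalize star x ⬝ᵥ ((F + H) *ᵥ x) = d at *
    field_simp
    linear_combination -2 * hqx - 2 * hscal
  · have h := congrArg Complex.re hscal
    rw [Complex.add_re, Complex.mul_re, him, mul_zero, sub_zero, ← hre] at h
    exact mul_right_cancel₀ hd.ne' (by rw [one_mul, ← h])
end

section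
/- Let F, G ∈ ℂ^{n×n} with F Hermitian positive definite and G positive semidefinite, and set H = (1/2)(G + G*). Let V = (F + H)⁻¹(F + G*). If λ ∈ ℂ is an eigenvalue of V with eigenvector x ≠ 0, then λ = 1 + (1/2) · (x*(G* − G)x) / (x*(F + H)x); in particular Re(λ) = 1. -/
open Matrix

/-!
The quadratic form of `F + H` at `y` is `Re (y*Fy) + Re (y*Gy)`, which is real and positive for
`y ≠ 0`; hence `F + H` is invertible and the eigenvalue equation becomes
`(F + G*) x = μ (F + H) x`. Pairing with `x` and using `F + G* = (F + H) + (1/2)(G* - G)` gives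
the formula for `μ`; the correction term is a purely imaginary number divided by a real one.
-/

lemma quadForm_conjTranspose {n : ℕ} (A : Matrix (Fin n) (Fin n) ℂ) (y : Fin n → ℂ) :
    star y ⬝ᵥ (Aᴴ *ᵥ y) = star (star y ⬝ᵥ (A *ᵥ y)) := by
  rw [← star_dotProduct, star_mulVec, dotProduct_mulVec]

/-- Let `F, G ∈ ℂ^{n×n}` with `F` Hermitian positive definite and `G`
positive semidefinite, and set `H = (1/2)(G + G*)`.  Let `V = (F + H)⁻¹(F + G*)`.  If `λ` is an
eigenvalue of `V` with eigenvector `x ≠ 0`, then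
`λ = 1 + (1/2) · (x*(G* − G)x) / (x*(F + H)x)`; in particular `Re λ = 1`. -/
theorem stmt2 {n : ℕ} (F G : Matrix (Fin n) (Fin n) ℂ)
    (hFherm : Fᴴ = F)
    (hFpos : ∀ x : Fin n → ℂ, x ≠ 0 → 0 < (star x ⬝ᵥ (F *ᵥ x)).re)
    (hGpsd : ∀ x : Fin n → ℂ, 0 ≤ (star x ⬝ᵥ (G *ᵥ x)).re)
    (H : Matrix (Fin n) (Fin n) ℂ) (hH : H = (1 / 2 : ℂ) • (G + Gᴴ))
    (V : Matrix (Fin n) (Fin n) ℂ) (hV : V = (F + H)⁻¹ * (F + Gᴴ))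
    (μ : ℂ) (x : Fin n → ℂ) (hx : x ≠ 0) (hEig : V *ᵥ x = μ • x) :
    μ = 1 + (1 / 2 : ℂ) * (star x ⬝ᵥ ((Gᴴ - G) *ᵥ x)) / (star x ⬝ᵥ ((F + H) *ᵥ x)) ∧
      μ.re = 1 := by
  have hquad : ∀ y : Fin n → ℂ, star y ⬝ᵥ ((F + H) *ᵥ y) =
      (((star y ⬝ᵥ (F *ᵥ y)).re + (star y ⬝ᵥ (G *ᵥ y)).re : ℝ) : ℂ) := by
    intro y
    have hF := quadForm_conjTranspose F y
    rw [hFherm] at hF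
    have hFim : (star y ⬝ᵥ (F *ᵥ y)).im = 0 := Complex.conj_eq_iff_im.mp hF.symm
    rw [hH, add_mulVec, smul_mulVec, add_mulVec, dotProduct_add, dotProduct_smul,
      dotProduct_add, quadForm_conjTranspose]
    apply Complex.ext
    · simp
      ring
    · simp [hFim]
  have hpos : ∀ y : Fin n → ℂ, y ≠ 0 →
      0 < (star y ⬝ᵥ (F *ᵥ y)).re + (star y ⬝ᵥ (G *ᵥ y)).re :=
    fun y hy => add_pos_of_pos_of_nonneg (hFpos y hy) (hGpsd y)
  have hdet : IsUnit (F + H).det := by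
    rw [isUnit_iff_ne_zero]
    intro h0
    obtain ⟨y, hy, hy0⟩ := Matrix.exists_mulVec_eq_zero_iff.mpr h0
    have h := hquad y
    rw [hy0, dotProduct_zero] at h
    exact (hpos y hy).ne (by exact_mod_cast h)
  have hgen : (F + Gᴴ) *ᵥ x = μ • ((F + H) *ᵥ x) := by
    rw [← mulVec_smul, ← hEig, hV, mulVec_mulVec, mul_nonsing_inv_cancel_left _ _ hdet]
  have hsplit : F + Gᴴ = (F + H) + (1 / 2 : ℂ) • (Gᴴ - G) := by
    rw [hH]
    module
  have hpair := congrArg (fun v => star x ⬝ᵥ v) hgen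
  simp only [hsplit, add_mulVec _ ((1 / 2 : ℂ) • (Gᴴ - G)), smul_mulVec, dotProduct_add,
    dotProduct_smul, smul_eq_mul] at hpair
  have hskew : (star x ⬝ᵥ ((Gᴴ - G) *ᵥ x)).re = 0 := by
    rw [sub_mulVec, dotProduct_sub, quadForm_conjTranspose]
    simp
  have hd := hquad x
  have hdpos := hpos x hx
  have hne : star x ⬝ᵥ ((F + H) *ᵥ x) ≠ 0 := by
    rw [hd]
    exact_mod_cast hdpos.ne'
  have hμ : μ = 1 + (1 / 2 : ℂ) * (star x ⬝ᵥ ((Gᴴ - G) *ᵥ x)) /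
      (star x ⬝ᵥ ((F + H) *ᵥ x)) := by
    apply mul_right_cancel₀ hne
    rw [add_mul, one_mul, div_mul_cancel₀ _ hne]
    exact hpair.symm
  refine ⟨hμ, ?_⟩
  rw [hμ, hd, Complex.add_re, Complex.div_ofReal_re]
  simp [hskew]
end

section
/- Let F, G ∈ ℂ^{n×n} with F Hermitian positive definite and G positive semidefinite. Then the matrix F + (1/2)(G + G*) is Hermitian positive definite, and consequently the 2n×2n block matrix R = [[F, -(1/2)(G+G*)],[(1/2)(G+G*), F + (G+G*)]] is invertible. -/
open Matrix

/-!
Write `H = (G + Gᴴ) / 2`. Since `x* Gᴴ x` is the complex conjugate of `x* G x`, the form `x* H x` has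
real part `Re (x* G x) ≥ 0`, so `F + H` inherits positive definiteness from `F`. In particular
`F + H` has trivial kernel and is invertible. Adding the first block row of `R` to the second and
then subtracting the second block column from the first turns `R` into the block upper triangular
matrix `[[F + H, -H], [0, F + H]]`, which is therefore invertible, and so is `R`.
-/

theorem re_star_dotProduct_conjTranspose_mulVec {n : ℕ} (G : Matrix (Fin n) (Fin n) ℂ)
    (x : Fin n → ℂ) : (star x ⬝ᵥ (Gᴴ *ᵥ x)).re = (star x ⬝ᵥ (G *ᵥ x)).re := by
  have h : star x ⬝ᵥ (Gᴴ *ᵥ x) = star (star x ⬝ᵥ (G *ᵥ x)) := by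
    rw [← star_dotProduct_star, star_star, star_mulVec, dotProduct_mulVec]
  rw [h]
  simp

theorem isUnit_of_re_pos {n : ℕ} (A : Matrix (Fin n) (Fin n) ℂ)
    (hA : ∀ x : Fin n → ℂ, x ≠ 0 → 0 < (star x ⬝ᵥ (A *ᵥ x)).re) : IsUnit A := by
  rw [← mulVec_injective_iff_isUnit, ← coe_mulVecLin, injective_iff_map_eq_zero]
  intro x hx
  by_contra hne
  have h := hA x hne
  rw [mulVecLin_apply] at hx
  simp [hx] at h

/-- The two outer factors undo the block row and column operations that make the matrix block
upper triangular. -/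
theorem isUnit_fromBlocks_of_isUnit_add {n : ℕ} (F H : Matrix (Fin n) (Fin n) ℂ)
    (h : IsUnit (F + H)) : IsUnit (fromBlocks F (-H) H (F + (H + H))) := by
  have key : fromBlocks F (-H) H (F + (H + H)) =
      fromBlocks 1 0 (-1) 1 * fromBlocks (F + H) (-H) 0 (F + H) * fromBlocks 1 0 1 1 := by
    simp only [fromBlocks_multiply, fromBlocks_inj]
    refine ⟨?_, ?_, ?_, ?_⟩ <;> simp <;> abel
  rw [key]
  refine ((isUnit_fromBlocks_zero₁₂.2 ⟨isUnit_one, isUnit_one⟩).mul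
    (isUnit_fromBlocks_zero₂₁.2 ⟨h, h⟩)).mul (isUnit_fromBlocks_zero₁₂.2 ⟨isUnit_one, isUnit_one⟩)

/-- Let `F, G ∈ ℂ^{n×n}` with `F` Hermitian positive definite and `G`
positive semidefinite.  Then `F + (1/2)(G + G*)` is Hermitian positive definite, and
consequently the block matrix `R = [[F, -(1/2)(G+G*)],[(1/2)(G+G*), F + (G+G*)]]` is
invertible. -/
theorem stmt6 {n : ℕ} (F G : Matrix (Fin n) (Fin n) ℂ)
    (hFherm : Fᴴ = F)
    (hFpos : ∀ x : Fin n → ℂ, x ≠ 0 → 0 < (star x ⬝ᵥ (F *ᵥ x)).re)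
    (hGpsd : ∀ x : Fin n → ℂ, 0 ≤ (star x ⬝ᵥ (G *ᵥ x)).re) :
    ((F + (1 / 2 : ℂ) • (G + Gᴴ))ᴴ = F + (1 / 2 : ℂ) • (G + Gᴴ) ∧
        ∀ x : Fin n → ℂ, x ≠ 0 →
          0 < (star x ⬝ᵥ ((F + (1 / 2 : ℂ) • (G + Gᴴ)) *ᵥ x)).re) ∧
      IsUnit (Matrix.fromBlocks F (-((1 / 2 : ℂ) • (G + Gᴴ)))
        ((1 / 2 : ℂ) • (G + Gᴴ)) (F + (G + Gᴴ))) := by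
  have hpos : ∀ x : Fin n → ℂ, x ≠ 0 →
      0 < (star x ⬝ᵥ ((F + (1 / 2 : ℂ) • (G + Gᴴ)) *ᵥ x)).re := by
    intro x hx
    have hG := hGpsd x
    have hF := hFpos x hx
    have hGs := re_star_dotProduct_conjTranspose_mulVec G x
    have hre : (star x ⬝ᵥ ((F + (1 / 2 : ℂ) • (G + Gᴴ)) *ᵥ x)).re =
        (star x ⬝ᵥ (F *ᵥ x)).re +
          1 / 2 * ((star x ⬝ᵥ (G *ᵥ x)).re + (star x ⬝ᵥ (Gᴴ *ᵥ x)).re) := by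
      simp only [add_mulVec, smul_mulVec, dotProduct_add, dotProduct_smul, Complex.add_re,
        smul_eq_mul, Complex.mul_re]
      norm_num
    rw [hre, hGs]
    linarith
  refine ⟨⟨?_, hpos⟩, ?_⟩
  · simp [conjTranspose_add, conjTranspose_smul, hFherm, add_comm]
  · have h := isUnit_fromBlocks_of_isUnit_add F _ (isUnit_of_re_pos _ hpos)
    rwa [← add_smul, add_halves, one_smul] at h
end

section
/- Let M, K ∈ ℝ^{n×n} be symmetric positive definite, let ν > 0 and ω > 0, and set F = M, G = √ν(K + iωM), R = [[M, -√ν K],[√ν K, M + 2√ν K]] and Q = [[M, -√ν(K − iωM)],[√ν(K + iωM), M + 2√ν K]]. Then every eigenvalue λ of R⁻¹Q satisfies Re(λ) = 1 and there exists a nonzero x ∈ ℂⁿ with Im(λ) = √ν·ω·(x*Mx)/(x*Mx + √ν·x*Kx) or Im(λ) = −√ν·ω·(x*Mx)/(x*Mx + √ν·x*Kx). -/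
/-!
Write `s = √ν`, `H = M + s K` and `v = (x, y)`. Since `Q - R = i s ω [[0, M], [M, 0]]`, the eigenvalue
equation reads `(μ - 1) R v = i s ω (M y, M x)`. Adding the two block rows of `R v` gives `H (x + y)`,
so `z = x + y` satisfies `(μ - 1) H z = i s ω M z`. If `z = 0`, then `y = -x` with `x ≠ 0`, and the
first block row reads `(μ - 1) H x = -i s ω M x`. In either case, pairing with the vector itself
(`eigen_pencil`) shows that `μ - 1` is purely imaginary with the claimed imaginary part.
The same row combination gives the invertibility of `R` (`block_ker`), needed to pass from `R⁻¹ Q`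
to the pencil `(Q, R)`.
-/

open Matrix

/-- The Hermitian form of a real SPD matrix is real and positive on nonzero complex vectors. -/
lemma form_pos {n : ℕ} {M : Matrix (Fin n) (Fin n) ℝ} (hM : M.PosDef) {x : Fin n → ℂ}
    (hx : x ≠ 0) : ∃ r : ℝ, 0 < r ∧ star x ⬝ᵥ (M.map Complex.ofReal *ᵥ x) = (r : ℂ) := by
  set a : Fin n → ℝ := fun i => (x i).re with ha
  set b : Fin n → ℝ := fun i => (x i).im with hb
  have hre : (star x ⬝ᵥ (M.map Complex.ofReal *ᵥ x)).re = a ⬝ᵥ (M *ᵥ a) + b ⬝ᵥ (M *ᵥ b) := by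
    simp [dotProduct, mulVec, ha, hb, Finset.sum_add_distrib]
  have him : (star x ⬝ᵥ (M.map Complex.ofReal *ᵥ x)).im = a ⬝ᵥ (M *ᵥ b) - b ⬝ᵥ (M *ᵥ a) := by
    simp [dotProduct, mulVec, ha, hb, Finset.sum_add_distrib, sub_eq_add_neg]
  have hsymm : a ⬝ᵥ (M *ᵥ b) = b ⬝ᵥ (M *ᵥ a) := by
    have hT : Mᵀ = M := by simpa [Matrix.IsHermitian] using hM.isHermitian
    rw [dotProduct_mulVec, ← mulVec_transpose, hT, dotProduct_comm]
  have hnn : ∀ c : Fin n → ℝ, 0 ≤ c ⬝ᵥ (M *ᵥ c) := fun c => by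
    simpa using hM.posSemidef.dotProduct_mulVec_nonneg c
  have hpos : ∀ c : Fin n → ℝ, c ≠ 0 → 0 < c ⬝ᵥ (M *ᵥ c) := fun c hc => by
    simpa using hM.dotProduct_mulVec_pos hc
  refine ⟨a ⬝ᵥ (M *ᵥ a) + b ⬝ᵥ (M *ᵥ b), ?_, ?_⟩
  · by_cases h : a = 0
    · have hb0 : b ≠ 0 := by
        intro h'
        apply hx
        funext i
        exact Complex.ext (congrFun h i) (congrFun h' i)
      linarith [hnn a, hpos b hb0]
    · linarith [hpos a h, hnn b]
  · apply Complex.ext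
    · rw [hre, Complex.ofReal_re]
    · rw [him, hsymm, sub_self, Complex.ofReal_im]

/-- A generalized eigenvalue `c` with `c (M + s K) x = i t M x`, `t` real, is `i t` times the
Rayleigh quotient of `x`. -/
lemma eigen_pencil {n : ℕ} {M K : Matrix (Fin n) (Fin n) ℝ} (hM : M.PosDef) (hK : K.PosDef)
    {s t : ℝ} (hs : 0 < s) {c : ℂ} {x : Fin n → ℂ} (hx : x ≠ 0)
    (h : c • (M.map Complex.ofReal *ᵥ x + (s : ℂ) • (K.map Complex.ofReal *ᵥ x)) =
      (Complex.I * (t : ℂ)) • (M.map Complex.ofReal *ᵥ x)) :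
    c.re = 0 ∧ (c.im : ℂ) = (t : ℂ) * (star x ⬝ᵥ (M.map Complex.ofReal *ᵥ x)) /
      (star x ⬝ᵥ (M.map Complex.ofReal *ᵥ x) +
        (s : ℂ) * (star x ⬝ᵥ (K.map Complex.ofReal *ᵥ x))) := by
  obtain ⟨m, hm, hm'⟩ := form_pos hM hx
  obtain ⟨k, hk, hk'⟩ := form_pos hK hx
  have h1 := congrArg (fun w => star x ⬝ᵥ w) h
  simp only [dotProduct_smul, dotProduct_add, smul_eq_mul, hm', hk'] at h1
  have hd : 0 < m + s * k := by positivity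
  have hre := congrArg Complex.re h1
  have him := congrArg Complex.im h1
  simp at hre him
  rw [hm', hk']
  refine ⟨hre.resolve_right hd.ne', ?_⟩
  have : c.im = t * m / (m + s * k) := by
    rw [eq_div_iff hd.ne']; linarith
  rw [this]; push_cast; rfl

lemma pencil_ker {n : ℕ} {M K : Matrix (Fin n) (Fin n) ℝ} (hM : M.PosDef) (hK : K.PosDef)
    {s : ℝ} (hs : 0 < s) {x : Fin n → ℂ}
    (h : M.map Complex.ofReal *ᵥ x + (s : ℂ) • (K.map Complex.ofReal *ᵥ x) = 0) : x = 0 := by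
  by_contra hx
  -- `c = 1`, `t = 0` would be a generalized eigenvalue with nonzero real part.
  have := (eigen_pencil (t := 0) (c := 1) hM hK hs hx (by rw [h]; simp)).1
  simp at this

/-- `[[M, -s K], [s K, M + 2 s K]]` has trivial kernel, by adding its block rows. -/
lemma block_ker {n : ℕ} {M K : Matrix (Fin n) (Fin n) ℝ} (hM : M.PosDef) (hK : K.PosDef)
    {s : ℝ} (hs : 0 < s) {x y : Fin n → ℂ}
    (h1 : M.map Complex.ofReal *ᵥ x - (s : ℂ) • (K.map Complex.ofReal *ᵥ y) = 0)
    (h2 : (s : ℂ) • (K.map Complex.ofReal *ᵥ x) + (M.map Complex.ofReal *ᵥ y +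
      (2 * (s : ℂ)) • (K.map Complex.ofReal *ᵥ y)) = 0) : x = 0 ∧ y = 0 := by
  have hz : x + y = 0 := by
    apply pencil_ker hM hK hs
    rw [mulVec_add, mulVec_add]
    ext i
    have t1 := congrFun h1 i
    have t2 := congrFun h2 i
    simp at t1 t2 ⊢
    linear_combination t1 + t2
  have hy : y = -x := by exact (neg_eq_of_add_eq_zero_right hz).symm
  subst hy
  have hx : x = 0 := by
    apply pencil_ker hM hK hs
    rw [mulVec_neg] at h1
    ext i
    have t1 := congrFun h1 i
    simp at t1 ⊢
    linear_combination t1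
  simp [hx]

/-- Let `M, K` be real SPD, `ν, ω > 0`, and consider the complex block
matrices `R = [[M, -√ν K],[√ν K, M + 2√ν K]]` and
`Q = [[M, -√ν(K − iωM)],[√ν(K + iωM), M + 2√ν K]]`.  Then every eigenvalue `λ` of `R⁻¹Q`
satisfies `Re λ = 1` and there is a nonzero `x ∈ ℂⁿ` with
`Im λ = ± √ν·ω·(x*Mx)/(x*Mx + √ν·x*Kx)`. -/
theorem stmt12 {n : ℕ} (M K : Matrix (Fin n) (Fin n) ℝ)
    (hM : M.PosDef) (hK : K.PosDef) (ν ω : ℝ) (hν : 0 < ν) (hω : 0 < ω)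
    (Mc Kc : Matrix (Fin n) (Fin n) ℂ)
    (hMc : Mc = M.map Complex.ofReal) (hKc : Kc = K.map Complex.ofReal)
    (Q R : Matrix (Fin n ⊕ Fin n) (Fin n ⊕ Fin n) ℂ)
    (hQ : Q = Matrix.fromBlocks Mc
      (-((Real.sqrt ν : ℂ) • (Kc - (Complex.I * (ω : ℂ)) • Mc)))
      ((Real.sqrt ν : ℂ) • (Kc + (Complex.I * (ω : ℂ)) • Mc))
      (Mc + (2 * (Real.sqrt ν : ℂ)) • Kc))
    (hR : R = Matrix.fromBlocks Mc (-((Real.sqrt ν : ℂ) • Kc))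
      ((Real.sqrt ν : ℂ) • Kc) (Mc + (2 * (Real.sqrt ν : ℂ)) • Kc)) :
    ∀ (μ : ℂ) (v : Fin n ⊕ Fin n → ℂ), v ≠ 0 → (R⁻¹ * Q) *ᵥ v = μ • v →
      μ.re = 1 ∧
        ∃ x : Fin n → ℂ, x ≠ 0 ∧
          ((μ.im : ℂ) = (Real.sqrt ν : ℂ) * (ω : ℂ) * (star x ⬝ᵥ (Mc *ᵥ x)) /
              (star x ⬝ᵥ (Mc *ᵥ x) + (Real.sqrt ν : ℂ) * (star x ⬝ᵥ (Kc *ᵥ x))) ∨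
            (μ.im : ℂ) = -((Real.sqrt ν : ℂ) * (ω : ℂ) * (star x ⬝ᵥ (Mc *ᵥ x)) /
              (star x ⬝ᵥ (Mc *ᵥ x) + (Real.sqrt ν : ℂ) * (star x ⬝ᵥ (Kc *ᵥ x))))) := by
  intro μ v hv h
  have hs : 0 < Real.sqrt ν := Real.sqrt_pos.mpr hν
  set s := Real.sqrt ν
  obtain ⟨x, y, rfl⟩ : ∃ x y : Fin n → ℂ, v = Sum.elim x y :=
    ⟨v ∘ Sum.inl, v ∘ Sum.inr, (Sum.elim_comp_inl_inr v).symm⟩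
  have hRv : ∀ x y : Fin n → ℂ, R *ᵥ Sum.elim x y = Sum.elim (Mc *ᵥ x - (s : ℂ) • (Kc *ᵥ y))
      ((s : ℂ) • (Kc *ᵥ x) + (Mc *ᵥ y + (2 * (s : ℂ)) • (Kc *ᵥ y))) := fun x y => by
    simp only [hR, fromBlocks_mulVec, Sum.elim_comp_inl, Sum.elim_comp_inr, neg_mulVec,
      smul_mulVec, add_mulVec, sub_eq_add_neg]
  have hdet : IsUnit R.det := by
    rw [isUnit_iff_ne_zero]
    intro h0
    obtain ⟨w, hw, hw0⟩ := exists_mulVec_eq_zero_iff.mpr h0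
    obtain ⟨x, y, rfl⟩ : ∃ x y : Fin n → ℂ, w = Sum.elim x y :=
      ⟨w ∘ Sum.inl, w ∘ Sum.inr, (Sum.elim_comp_inl_inr w).symm⟩
    rw [hRv] at hw0
    have e1 := congrArg (fun f => f ∘ Sum.inl) hw0
    have e2 := congrArg (fun f => f ∘ Sum.inr) hw0
    simp only [Sum.elim_comp_inl, Sum.elim_comp_inr] at e1 e2
    subst hMc hKc
    obtain ⟨rfl, rfl⟩ := block_ker hM hK hs e1 e2
    exact hw (by ext i; cases i <;> rfl)
  have hQR : Q *ᵥ Sum.elim x y = μ • (R *ᵥ Sum.elim x y) := by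
    rw [← mulVec_smul, ← h, mulVec_mulVec, mul_nonsing_inv_cancel_left _ _ hdet]
  rw [hRv, hQ, fromBlocks_mulVec] at hQR
  have e1 := congrArg (fun f => f ∘ Sum.inl) hQR
  have e2 := congrArg (fun f => f ∘ Sum.inr) hQR
  have hsm : ∀ a b : Fin n → ℂ, μ • Sum.elim a b = Sum.elim (μ • a) (μ • b) := fun a b => by
    ext i; cases i <;> rfl
  simp only [hsm, Sum.elim_comp_inl, Sum.elim_comp_inr, neg_mulVec, smul_mulVec, add_mulVec,
    sub_mulVec] at e1 e2
  subst hMc hKc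
  by_cases hz : x + y = 0
  · have hy : y = -x := by exact (neg_eq_of_add_eq_zero_right hz).symm
    subst hy
    have hx : x ≠ 0 := by
      rintro rfl
      exact hv (by ext i; cases i <;> simp)
    obtain ⟨r1, r2⟩ := eigen_pencil (c := μ - 1) (t := -(s * ω)) hM hK hs hx (by
      simp only [mulVec_neg] at e1
      push_cast
      ext i
      have := congrFun e1 i
      simp at this ⊢
      linear_combination -this)
    refine ⟨by simpa [sub_eq_zero] using r1, x, hx, Or.inr ?_⟩
    simp only [Complex.sub_im, Complex.one_im, sub_zero] at r2
    rw [r2]; push_cast; ring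
  · obtain ⟨r1, r2⟩ := eigen_pencil (c := μ - 1) (t := s * ω) hM hK hs hz (by
      simp only [mulVec_add]
      push_cast
      ext i
      have t1 := congrFun e1 i
      have t2 := congrFun e2 i
      simp at t1 t2 ⊢
      linear_combination -t1 - t2)
    refine ⟨by simpa [sub_eq_zero] using r1, x + y, hz, Or.inl ?_⟩
    simp only [Complex.sub_im, Complex.one_im, sub_zero] at r2
    rw [r2]; push_cast; ring
end

section
/- Let F, G ∈ ℂ^{n×n} with F Hermitian positive definite and G positive semidefinite. Define A = [[F, -G*],[G, F]] and Q = [[F, -G*],[G, F + G + G*]] as 2n×2n block matrices. Then Q is invertible and every eigenvalue of Q⁻¹A is real and lies in the interval [1/2, 1]. -/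
open Matrix

/-!
Write `v = (x, y)`. An eigenvalue `μ ≠ 1` of `Q⁻¹A` satisfies `A v = μ Q v`, whose first block row
gives `F x = G* y`. Testing the second block row with `y` then gives
`(1 - μ) (a + b) = μ s`, where `a = x*Fx ≥ 0`, `b = y*Fy > 0` and `s = 2 Re (y*Gy) ≥ 0`.
Hence `μ = (a + b) / (a + b + s)` is real and at most `1`. Moreover `s = 2 Re (y*Fx)`, so
`(x - y)*F(x - y) ≥ 0` says `s ≤ a + b`, that is `μ ≥ 1/2`. The same test applied to `Q v = 0` gives
`a + b + s = 0`, which forces `v = 0`, so `Q` is invertible. The identities and inequalities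
for `a`, `b`, `s` are collected in `block_row_facts`.
-/

lemma star_dot_conjTranspose_mulVec {n : ℕ} (M : Matrix (Fin n) (Fin n) ℂ) (x y : Fin n → ℂ) :
    star x ⬝ᵥ (Mᴴ *ᵥ y) = star (star y ⬝ᵥ (M *ᵥ x)) := by
  rw [star_dotProduct, star_mulVec, conjTranspose_conjTranspose, dotProduct_mulVec]

/-- Under the first block row `F x = G* y`, the numbers `a = y*Gx` (which equals `x*Fx`),
`b = y*Fy` and `s = y*(G + G*)y` are real, `a` and `s` are nonnegative, `s ≤ a + b`, and `b` is
positive unless `x` and `y` both vanish. -/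
lemma block_row_facts {n : ℕ} {F G : Matrix (Fin n) (Fin n) ℂ}
    (hFherm : Fᴴ = F)
    (hFpos : ∀ x : Fin n → ℂ, x ≠ 0 → 0 < (star x ⬝ᵥ (F *ᵥ x)).re)
    (hGpsd : ∀ x : Fin n → ℂ, 0 ≤ (star x ⬝ᵥ (G *ᵥ x)).re)
    {x y : Fin n → ℂ} (h : F *ᵥ x = Gᴴ *ᵥ y) :
    ∃ a b s : ℝ, star y ⬝ᵥ (G *ᵥ x) = a ∧ star y ⬝ᵥ (F *ᵥ y) = b ∧
      star y ⬝ᵥ (G *ᵥ y) + star y ⬝ᵥ (Gᴴ *ᵥ y) = s ∧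
      0 ≤ a ∧ 0 ≤ s ∧ s ≤ a + b ∧ ((x = 0 ∧ y = 0) ∨ 0 < b) := by
  have hsymm : ∀ u w : Fin n → ℂ, star u ⬝ᵥ (F *ᵥ w) = star (star w ⬝ᵥ (F *ᵥ u)) := by
    intro u w
    have := star_dot_conjTranspose_mulVec F u w
    rwa [hFherm] at this
  have him : ∀ u : Fin n → ℂ, (star u ⬝ᵥ (F *ᵥ u)).im = 0 := by
    intro u
    have := congrArg Complex.im (hsymm u u)
    simp only [Complex.star_def, Complex.conj_im] at this
    linarith
  have hnn : ∀ u : Fin n → ℂ, 0 ≤ (star u ⬝ᵥ (F *ᵥ u)).re := by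
    intro u
    by_cases hu : u = 0
    · simp [hu]
    · exact (hFpos u hu).le
  have hG := star_dot_conjTranspose_mulVec G y y
  have hGx : star y ⬝ᵥ (G *ᵥ x) = star x ⬝ᵥ (F *ᵥ x) := by
    rw [hsymm x x, h, star_dot_conjTranspose_mulVec, star_star]
  have hyx : star y ⬝ᵥ (F *ᵥ x) = star (star y ⬝ᵥ (G *ᵥ y)) := by rw [h, hG]
  have hxy : star x ⬝ᵥ (F *ᵥ y) = star y ⬝ᵥ (G *ᵥ y) := by rw [hsymm x y, hyx, star_star]
  refine ⟨(star x ⬝ᵥ (F *ᵥ x)).re, (star y ⬝ᵥ (F *ᵥ y)).re, 2 * (star y ⬝ᵥ (G *ᵥ y)).re,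
    ?_, ?_, ?_, hnn x, by linarith [hGpsd y], ?_, ?_⟩
  · rw [hGx]
    exact Complex.ext (by simp) (by simp [him])
  · exact Complex.ext (by simp) (by simp [him])
  · rw [hG]
    apply Complex.ext
    · simp; ring
    · simp
  · have := hnn (x - y)
    rw [mulVec_sub, star_sub, sub_dotProduct, dotProduct_sub, dotProduct_sub, hyx, hxy] at this
    simp only [Complex.sub_re, Complex.star_def, Complex.conj_re] at this
    linarith
  · by_cases hy : y = 0
    · left
      refine ⟨?_, hy⟩
      by_contra hx
      have := hFpos x hx
      rw [h, hy] at this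
      simp at this
    · exact Or.inr (hFpos y hy)

/-- Let `F, G ∈ ℂ^{n×n}` with `F` Hermitian positive definite and `G`
positive semidefinite, and define the block matrices `A = [[F, -G*],[G, F]]` and
`Q = [[F, -G*],[G, F + G + G*]]`.  Then `Q` is invertible and every eigenvalue of `Q⁻¹A`
is real and lies in `[1/2, 1]`. -/
theorem stmt15 {n : ℕ} (F G : Matrix (Fin n) (Fin n) ℂ)
    (hFherm : Fᴴ = F)
    (hFpos : ∀ x : Fin n → ℂ, x ≠ 0 → 0 < (star x ⬝ᵥ (F *ᵥ x)).re)
    (hGpsd : ∀ x : Fin n → ℂ, 0 ≤ (star x ⬝ᵥ (G *ᵥ x)).re)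
    (A Q : Matrix (Fin n ⊕ Fin n) (Fin n ⊕ Fin n) ℂ)
    (hA : A = Matrix.fromBlocks F (-Gᴴ) G F)
    (hQ : Q = Matrix.fromBlocks F (-Gᴴ) G (F + G + Gᴴ)) :
    IsUnit Q ∧
      ∀ (μ : ℂ) (v : Fin n ⊕ Fin n → ℂ), v ≠ 0 → (Q⁻¹ * A) *ᵥ v = μ • v →
        μ.im = 0 ∧ 1 / 2 ≤ μ.re ∧ μ.re ≤ 1 := by
  subst hA hQ
  have hU : IsUnit (Matrix.fromBlocks F (-Gᴴ) G (F + G + Gᴴ)) := by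
    rw [← Matrix.mulVec_injective_iff_isUnit]
    refine (injective_iff_map_eq_zero (Matrix.mulVecLin _)).2 ?_
    intro v hv
    obtain ⟨x, y, rfl⟩ : ∃ x y, v = Sum.elim x y :=
      ⟨v ∘ Sum.inl, v ∘ Sum.inr, (Sum.elim_comp_inl_inr v).symm⟩
    rw [Matrix.mulVecLin_apply, fromBlocks_mulVec] at hv
    have h1 : F *ᵥ x + (-Gᴴ) *ᵥ y = 0 := funext fun i => congrFun hv (Sum.inl i)
    have h2 : G *ᵥ x + (F + G + Gᴴ) *ᵥ y = 0 := funext fun i => congrFun hv (Sum.inr i)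
    have h : F *ᵥ x = Gᴴ *ᵥ y := by
      rwa [neg_mulVec, ← sub_eq_add_neg, sub_eq_zero] at h1
    obtain ⟨a, b, s, ha, hb, hs, ha0, hs0, -, ⟨rfl, rfl⟩ | hb0⟩ :=
      block_row_facts hFherm hFpos hGpsd h
    · simp
    · have h3 := congrArg (star y ⬝ᵥ ·) h2
      simp only [add_mulVec, dotProduct_add, dotProduct_zero] at h3
      have h4 : (a : ℂ) + b + s = 0 := by rw [← ha, ← hb, ← hs, ← h3]; ring
      have h5 : a + b + s = 0 := by exact_mod_cast h4
      linarith
  refine ⟨hU, ?_⟩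
  intro μ v hv0 hv
  have hAv : Matrix.fromBlocks F (-Gᴴ) G F *ᵥ v =
      μ • (Matrix.fromBlocks F (-Gᴴ) G (F + G + Gᴴ) *ᵥ v) := by
    rw [← mulVec_smul, ← hv, mulVec_mulVec, ← Matrix.mul_assoc,
      Matrix.mul_nonsing_inv _ ((Matrix.isUnit_iff_isUnit_det _).1 hU), Matrix.one_mul]
  by_cases hμ : μ = 1
  · subst hμ
    norm_num
  obtain ⟨x, y, rfl⟩ : ∃ x y, v = Sum.elim x y :=
    ⟨v ∘ Sum.inl, v ∘ Sum.inr, (Sum.elim_comp_inl_inr v).symm⟩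
  rw [fromBlocks_mulVec, fromBlocks_mulVec] at hAv
  have h1 : F *ᵥ x + (-Gᴴ) *ᵥ y = μ • (F *ᵥ x + (-Gᴴ) *ᵥ y) :=
    funext fun i => congrFun hAv (Sum.inl i)
  have h2 : G *ᵥ x + F *ᵥ y = μ • (G *ᵥ x + (F + G + Gᴴ) *ᵥ y) :=
    funext fun i => congrFun hAv (Sum.inr i)
  have h : F *ᵥ x = Gᴴ *ᵥ y := by
    have h3 : (1 - μ) • (F *ᵥ x + (-Gᴴ) *ᵥ y) = 0 := by
      rw [sub_smul, one_smul, ← h1, sub_self]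
    have h4 := (smul_eq_zero.1 h3).resolve_left (sub_ne_zero.2 (Ne.symm hμ))
    rwa [neg_mulVec, ← sub_eq_add_neg, sub_eq_zero] at h4
  obtain ⟨a, b, s, ha, hb, hs, ha0, hs0, hsab, ⟨rfl, rfl⟩ | hb0⟩ :=
    block_row_facts hFherm hFpos hGpsd h
  · exact absurd (by simp) hv0
  · have h3 := congrArg (star y ⬝ᵥ ·) h2
    simp only [add_mulVec, dotProduct_add, dotProduct_smul, smul_eq_mul] at h3
    have h4 : μ * ((a + b + s : ℝ) : ℂ) = ((a + b : ℝ) : ℂ) := by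
      push_cast
      rw [← ha, ← hb, ← hs]
      linear_combination -h3
    have hpos : 0 < a + b + s := by linarith
    have h5 : μ = (((a + b) / (a + b + s) : ℝ) : ℂ) := by
      rw [Complex.ofReal_div, eq_div_iff (by exact_mod_cast hpos.ne'), h4]
    rw [h5]
    refine ⟨Complex.ofReal_im _, ?_, ?_⟩
    · rw [Complex.ofReal_re, div_le_div_iff₀ two_pos hpos]
      linarith
    · rw [Complex.ofReal_re, div_le_one hpos]
      linarith
end
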